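/- Let q = p^m ≡ 5 (mod 8) be a prime power with primitive element α of F_q, and let q = s² + t² be the Katre–Rajwade-normalized representation. Then D = C_0^4 ∪ C_3^4 satisfies Δ(D) = ((q−3+t)/4)·C_0^2 + ((q−3−t)/4)·C_1^2 as multisets; in particular, D is a skew PDS corresponding to the Paley (q,(q−1)/2,(q−5)/4,(q−1)/4)-PDS C_0^2 if t = −2, and corresponding to the Paley (q,(q−1)/2,(q−5)/4,(q−1)/4)-PDS C_1^2 if t = 2. -/

import Mathlib

open Finset

section Defs

variable {G : Type*} [AddCommGroup G] [Fintype G] [DecidableEq G]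

/-- The multiset `Δ(D)` of internal differences `x - y` (for `x ≠ y` in `D`). -/
def intDiff (D : Finset G) : Multiset G :=
  ((D ×ˢ D).filter (fun p => p.1 ≠ p.2)).val.map (fun p => p.1 - p.2)

/-- The multiset `Δ(D, E)` of external differences `x - y` for `x ∈ D`, `y ∈ E`. -/
def extDiff (D E : Finset G) : Multiset G :=
  (D ×ˢ E).val.map (fun p => p.1 - p.2)

/-- The finset `G^*` of nonzero elements of `G`. -/
def Gstar (G : Type*) [AddCommGroup G] [Fintype G] [DecidableEq G] : Finset G :=
  Finset.univ.erase 0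

/-- `A` is a `(v, k, lam, mu)` partial difference set in `G`:
`Δ(A) = lam • A^* + mu • (G^* \ A)`. -/
def IsPDS (A : Finset G) (v k lam mu : ℕ) : Prop :=
  Fintype.card G = v ∧ A.card = k ∧
    intDiff A = lam • (A.erase 0).val + mu • (Gstar G \ A).val

/-- `D` is a `(v, k, lam, mu)` skew partial difference set corresponding to the
`(v, k, lam, mu)`-PDS `A`: `Δ(D) = lam • A^* + mu • (G^* \ A)`. -/
def IsSkewPDS (D A : Finset G) (v k lam mu : ℕ) : Prop :=
  IsPDS A v k lam mu ∧ D.card = k ∧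
    intDiff D = lam • (A.erase 0).val + mu • (Gstar G \ A).val

/-- `D` is an `(n, m, k₁, …, k_m; lam, mu)` disjoint partial difference family relative
to `T`: the `D i` are pairwise disjoint subsets of `G^*` of sizes `k i`, and
`∑ i, Δ(D i) = lam • T + mu • (G^* \ T)`. -/
def IsDPDF {ι : Type*} [Fintype ι] (D : ι → Finset G) (n m : ℕ) (k : ι → ℕ)
    (T : Finset G) (lam mu : ℕ) : Prop :=
  Fintype.card G = n ∧ Fintype.card ι = m ∧
    (∀ i, (0 : G) ∉ D i) ∧ (∀ i, (D i).card = k i) ∧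
    (Pairwise (fun i j => Disjoint (D i) (D j))) ∧
    ∑ i, intDiff (D i) = lam • T.val + mu • (Gstar G \ T).val

/-- `D` is an `(n, m, k₁, …, k_m; lam, mu)` external partial difference family relative
to `T`: the `D i` are pairwise disjoint subsets of `G^*` of sizes `k i`, and
`∑_{i ≠ j}, Δ(D i, D j) = lam • T + mu • (G^* \ T)`. -/
def IsEPDF {ι : Type*} [Fintype ι] [DecidableEq ι] (D : ι → Finset G) (n m : ℕ)
    (k : ι → ℕ) (T : Finset G) (lam mu : ℕ) : Prop :=
  Fintype.card G = n ∧ Fintype.card ι = m ∧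
    (∀ i, (0 : G) ∉ D i) ∧ (∀ i, (D i).card = k i) ∧
    (Pairwise (fun i j => Disjoint (D i) (D j))) ∧
    ∑ i, ∑ j ∈ Finset.univ.erase i, extDiff (D i) (D j)
      = lam • T.val + mu • (Gstar G \ T).val

/-- `D` is an `(n, m, k₁, …, k_m, lam)` disjoint difference family:
`∑ i, Δ(D i) = lam • G^*`. -/
def IsDDF {ι : Type*} [Fintype ι] (D : ι → Finset G) (n m : ℕ) (k : ι → ℕ)
    (lam : ℕ) : Prop :=
  Fintype.card G = n ∧ Fintype.card ι = m ∧
    (∀ i, (0 : G) ∉ D i) ∧ (∀ i, (D i).card = k i) ∧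
    (Pairwise (fun i j => Disjoint (D i) (D j))) ∧
    ∑ i, intDiff (D i) = lam • (Gstar G).val

/-- `D` is an `(n, m, k₁, …, k_m, lam)` external difference family:
`∑_{i ≠ j}, Δ(D i, D j) = lam • G^*`. -/
def IsEDF {ι : Type*} [Fintype ι] [DecidableEq ι] (D : ι → Finset G) (n m : ℕ)
    (k : ι → ℕ) (lam : ℕ) : Prop :=
  Fintype.card G = n ∧ Fintype.card ι = m ∧
    (∀ i, (0 : G) ∉ D i) ∧ (∀ i, (D i).card = k i) ∧
    (Pairwise (fun i j => Disjoint (D i) (D j))) ∧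
    ∑ i, ∑ j ∈ Finset.univ.erase i, extDiff (D i) (D j) = lam • (Gstar G).val

end Defs

section Cyclotomy

variable {F : Type*} [Field F] [Fintype F] [DecidableEq F]

/-- The cyclotomic class `C_i^e = α^i ⟨α^e⟩` of order `e` in the finite field `F`,
with respect to the primitive element `α`.  (Since `α` has multiplicative order at most
`|F| - 1`, letting `j` range over `0, …, |F| - 1` captures the whole class.) -/
def cycClass (α : F) (e i : ℕ) : Finset F :=
  (Finset.range (Fintype.card F)).image (fun j => α ^ (e * j + i))

/-- `α` is a primitive element of the finite field `F`: every nonzero element of `F`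
is a power of `α`. -/
def IsPrimitiveElt (α : F) : Prop :=
  ∀ x : F, x ≠ 0 → ∃ n : ℕ, α ^ n = x

end Cyclotomy

/-!
Let `χ` be the quartic character of `F` with values in `ℤ[i]` and `χ α = i`, and let `η = χ ^ 2` be
the quadratic character. The signed indicator of `D = C_0^4 ∪ C_3^4` is `re χ - im χ`, so the number
of representations of `d` as a difference of elements of `D` is given by the autocorrelation of
this function. That is a combination of the Jacobi sums of `(χ, χ⁻¹)` and `(χ, χ)`. The first is
trivial, and since `χ (-1) = -1` the second is `-J`, where `J = J(χ, η)`; altogether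
`4 * count d = q - 3 - η d * im J`.

It remains to see that `im J = -t`. The norm of `J` is `q`, and
`J + q = ∑ x, (χ x - 1) * (η (1 - x) - 1)` is divisible by `2 * (1 + i)`, which forces
`re J ≡ 1 (mod 4)` and `im J` even. Hence `(re J, im J)` and `(s, t)` both solve `q = x ^ 2 + y ^ 2`
with the same normalization, and only the sign of `im J` is in doubt. It is found by sending `i` to
an element of order four of `F`: there `χ` becomes a power map and the conjugate of `J` a binomial
coefficient, which by Lucas' theorem is not divisible by `p`.
-/

section DifferenceCounts

variable {G : Type*} [AddCommGroup G] [DecidableEq G]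

lemma count_zero_intDiff (D : Finset G) : (intDiff D).count 0 = 0 := by
  simp only [Multiset.count_eq_zero, intDiff, Multiset.mem_map, mem_val, mem_filter]
  rintro ⟨⟨x, y⟩, ⟨-, hxy⟩, h⟩
  exact hxy (sub_eq_zero.mp h)

lemma count_intDiff (D : Finset G) {d : G} (hd : d ≠ 0) :
    (intDiff D).count d = #{x ∈ D | x - d ∈ D} := by
  rw [intDiff, Multiset.count_map, ← Finset.filter_val, Finset.card_val]
  refine card_nbij' Prod.fst (fun x ↦ (x, x - d)) ?_ ?_ ?_ ?_
  · rintro ⟨x, y⟩ h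
    obtain ⟨⟨⟨hx, hy⟩, -⟩, rfl⟩ := by simpa using h
    simpa using ⟨hx, hy⟩
  · intro x h
    obtain ⟨hx, hxd⟩ := by simpa using h
    have hne : x ≠ x - d := fun h ↦ hd (sub_eq_self.mp h.symm)
    simp [hx, hxd, hne]
  · rintro ⟨x, y⟩ h
    obtain ⟨-, rfl⟩ := by simpa using h
    simp
  · exact fun _ _ ↦ rfl

lemma intDiff_eq_of_forall_count_eq {D E : Finset G}
    (h : ∀ d ≠ 0, (intDiff D).count d = (intDiff E).count d) : intDiff D = intDiff E := by
  ext d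
  obtain rfl | hd := eq_or_ne d 0
  · rw [count_zero_intDiff, count_zero_intDiff]
  · exact h d hd

/-- The `±1`-valued indicator of a subset `D` of `G^*`, set to `0` at the origin. When `D` is a
union of cyclotomic classes it is a combination of multiplicative characters. -/
def signedIndicator (D : Finset G) (x : G) : ℤ :=
  if x = 0 then 0 else if x ∈ D then 1 else -1

lemma two_mul_ite_mem_eq {D : Finset G} (hD : 0 ∉ D) (x : G) :
    2 * (if x ∈ D then 1 else 0) = 1 - (if x = 0 then 1 else 0) + signedIndicator D x := by
  rw [signedIndicator]
  obtain rfl | hx := eq_or_ne x 0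
  · simp [hD]
  · by_cases hxD : x ∈ D <;> simp [hx, hxD]

variable [Fintype G]

lemma intDiff_eq_of_forall_count_eq_ite {A D : Finset G} (hA : 0 ∉ A) {lam mu : ℕ}
    (h : ∀ d ≠ 0, (intDiff D).count d = if d ∈ A then lam else mu) :
    intDiff D = lam • A.val + mu • (Gstar G \ A).val := by
  ext d
  rw [Multiset.count_add, Multiset.count_nsmul, Multiset.count_nsmul,
    Multiset.count_eq_of_nodup A.nodup, Multiset.count_eq_of_nodup (Gstar G \ A).nodup]
  simp only [mem_val, Gstar, mem_sdiff, mem_erase, mem_univ, and_true]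
  obtain rfl | hd := eq_or_ne d 0
  · simp [count_zero_intDiff, hA]
  · by_cases hdA : d ∈ A <;> simp [h d hd, hd, hdA]

lemma IsPDS.isSkewPDS {A D : Finset G} {v k lam mu : ℕ} (hA : IsPDS A v k lam mu)
    (hcard : #D = k) (hD : intDiff D = intDiff A) : IsSkewPDS D A v k lam mu :=
  ⟨hA, hcard, hD.trans hA.2.2⟩

lemma two_mul_card_eq {D : Finset G} (hD : 0 ∉ D) :
    2 * (#D : ℤ) = Fintype.card G - 1 + ∑ x, signedIndicator D x := by
  calc 2 * (#D : ℤ) = ∑ x, 2 * (if x ∈ D then 1 else 0) := by simp [mul_comm]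
    _ = _ := by simp [two_mul_ite_mem_eq hD, sum_add_distrib]

lemma four_mul_count_intDiff {D : Finset G} (hD : 0 ∉ D) {d : G} (hd : d ≠ 0) :
    4 * ((intDiff D).count d : ℤ) = Fintype.card G - 2 + 2 * ∑ x, signedIndicator D x
      - signedIndicator D d - signedIndicator D (-d)
      + ∑ x, signedIndicator D x * signedIndicator D (x - d) := by
  set σ := signedIndicator D
  let δ (x : G) : ℤ := if x = 0 then 1 else 0
  have hδ : ∑ x, δ x = 1 := by simp [δ]
  have hδσ : ∑ x, δ x * σ (x - d) = σ (-d) := by simp [δ]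
  have hσδ : ∑ x, σ x * δ (x - d) = σ d := by simp [δ, sub_eq_zero]
  have hδδ : ∑ x, δ x * δ (x - d) = 0 := by simp [δ, sub_eq_zero, hd]
  have hshift (f : G → ℤ) : ∑ x, f (x - d) = ∑ x, f x := (Equiv.subRight d).sum_comp f
  calc 4 * ((intDiff D).count d : ℤ)
      = ∑ x, (2 * if x ∈ D then 1 else 0) * (2 * if x - d ∈ D then 1 else 0) := by
        simp [count_intDiff D hd, sum_ite, filter_inter, mul_comm]
    _ = ∑ x, (1 - δ x + σ x) * (1 - δ (x - d) + σ (x - d)) := by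
        simp only [two_mul_ite_mem_eq hD, δ, σ]
    _ = ∑ x, (1 - δ x - δ (x - d) + σ x + σ (x - d) + δ x * δ (x - d) - δ x * σ (x - d)
          - σ x * δ (x - d) + σ x * σ (x - d)) := sum_congr rfl fun x _ ↦ by ring
    _ = _ := by
        simp only [sum_add_distrib, sum_sub_distrib, hshift, hδσ, hσδ, hδδ, hδ, sum_const,
          card_univ, nsmul_eq_mul, mul_one]
        ring

end DifferenceCounts

section JacobiSums

variable {F R : Type*} [Field F] [Fintype F] [CommRing R]

lemma sum_mulChar_mul_apply_sub (χ φ : MulChar F R) {d : F} (hd : d ≠ 0) :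
    ∑ x, χ x * φ (x - d) = χ d * φ d * φ (-1) * jacobiSum χ φ := by
  rw [jacobiSum, mul_sum, ← Equiv.sum_comp (Equiv.mulLeft₀ d hd)]
  refine sum_congr rfl fun x _ ↦ ?_
  rw [Equiv.mulLeft₀_apply, show d * x - d = d * (-1 * (1 - x)) by ring]
  simp only [map_mul]
  ring

-- Substitute `x ↦ x / (x - 1)`, an involution of `F \ {1}`.
lemma jacobiSum_eq_jacobiSum_inv_mul (χ φ : MulChar F R) :
    jacobiSum χ φ = χ (-1) * jacobiSum χ (χ * φ)⁻¹ := by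
  classical
  have hdiv {x : F} (hx : x ≠ 1) : x / (x - 1) - 1 = (x - 1)⁻¹ := by
    have := sub_ne_zero.mpr hx
    field_simp
    ring
  have hmem {x : F} (hx : x ∈ univ.erase 1) : x / (x - 1) ∈ univ.erase 1 := by
    have hx1 := ne_of_mem_erase hx
    rw [mem_erase, ne_eq, ← sub_eq_zero, hdiv hx1]
    exact ⟨inv_ne_zero (sub_ne_zero.mpr hx1), mem_univ _⟩
  have hinvol {x : F} (hx : x ∈ univ.erase 1) : x / (x - 1) / (x / (x - 1) - 1) = x := by
    have hx1 := ne_of_mem_erase hx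
    rw [hdiv hx1, div_inv_eq_mul, div_mul_cancel₀ x (sub_ne_zero.mpr hx1)]
  have hterm {x : F} (hx : x ∈ univ.erase 1) :
      χ x * φ (1 - x) = χ (-1) * (χ (x / (x - 1)) * (χ * φ)⁻¹ (1 - x / (x - 1))) := by
    have hx1 := sub_ne_zero.mpr (ne_of_mem_erase hx)
    have hx' : 1 - x / (x - 1) = (1 - x)⁻¹ := by
      rw [← neg_sub, hdiv (ne_of_mem_erase hx), ← neg_sub x 1, inv_neg]
    rw [hx', MulChar.inv_apply', inv_inv, MulChar.mul_apply, ← mul_assoc, ← mul_assoc, ← map_mul,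
      ← map_mul]
    congr 2
    field_simp
    ring
  have herase (ψ : MulChar F R) :
      jacobiSum χ ψ = ∑ x ∈ univ.erase 1, χ x * ψ (1 - x) := by
    rw [jacobiSum, sum_erase _ (by rw [sub_self, ψ.map_zero, mul_zero])]
  rw [herase, herase, mul_sum]
  exact sum_nbij' (fun x ↦ x / (x - 1)) (fun x ↦ x / (x - 1)) (fun _ ↦ hmem) (fun _ ↦ hmem)
    (fun _ ↦ hinvol) (fun _ ↦ hinvol) fun _ ↦ hterm

lemma jacobiSum_self_eq {χ : MulChar F R} (hχ : χ ^ 4 = 1) :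
    jacobiSum χ χ = χ (-1) * jacobiSum χ (χ ^ 2) := by
  rw [jacobiSum_eq_jacobiSum_inv_mul, ← sq, inv_eq_of_mul_eq_one_left (a := χ ^ 2) (b := χ ^ 2)]
  rw [← pow_add, hχ]

lemma sum_mulChar_mul_inv_apply_sub [IsDomain R] {χ : MulChar F R} (hχ : χ ≠ 1) {d : F}
    (hd : d ≠ 0) : ∑ x, χ x * χ⁻¹ (x - d) = -1 := by
  have hinv {x : F} (hx : x ≠ 0) : χ x * χ⁻¹ x = 1 := by
    rw [MulChar.inv_apply', ← map_mul, mul_inv_cancel₀ hx, map_one]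
  rw [sum_mulChar_mul_apply_sub _ _ hd, jacobiSum_nontrivial_inv hχ, hinv hd, one_mul, mul_neg,
    mul_comm, hinv (neg_ne_zero.mpr one_ne_zero)]

lemma sum_quadraticChar_mul_apply_sub [DecidableEq F] (hF : ringChar F ≠ 2) {d : F}
    (hd : d ≠ 0) : ∑ x, quadraticChar F x * quadraticChar F (x - d) = -1 := by
  simpa [(quadraticChar_isQuadratic F).inv] using
    sum_mulChar_mul_inv_apply_sub (quadraticChar_ne_one hF) hd

lemma mul_dvd_jacobiSum_add_card [IsDomain R] {χ φ : MulChar F R} (hχ : χ ≠ 1) (hφ : φ ≠ 1)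
    {a b : R} (ha : ∀ x ≠ 0, a ∣ χ x - 1) (hb : ∀ x ≠ 0, b ∣ φ x - 1) :
    a * b ∣ jacobiSum χ φ + Fintype.card F := by
  have hφ' : ∑ x, φ (1 - x) = 0 :=
    ((Equiv.subLeft 1).sum_comp φ).trans (MulChar.sum_eq_zero_of_ne_one hφ)
  have hsum : jacobiSum χ φ + Fintype.card F = ∑ x, (χ x - 1) * (φ (1 - x) - 1) := by
    simp [jacobiSum, sub_mul, mul_sub, sum_sub_distrib, hφ', MulChar.sum_eq_zero_of_ne_one hχ]
  rw [hsum]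
  refine dvd_sum fun x _ ↦ ?_
  obtain rfl | hx0 := eq_or_ne x 0
  · simp
  obtain rfl | hx1 := eq_or_ne x 1
  · simp
  exact mul_dvd_mul (ha x hx0) (hb _ (sub_ne_zero.mpr hx1.symm))

end JacobiSums

section GaussianCharacters

lemma gaussianInt_re_sum {ι : Type*} (S : Finset ι) (f : ι → GaussianInt) :
    (∑ x ∈ S, f x).re = ∑ x ∈ S, (f x).re :=
  map_sum (⟨⟨Zsqrtd.re, rfl⟩, fun _ _ ↦ rfl⟩ : GaussianInt →+ ℤ) f S

lemma gaussianInt_im_sum {ι : Type*} (S : Finset ι) (f : ι → GaussianInt) :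
    (∑ x ∈ S, f x).im = ∑ x ∈ S, (f x).im :=
  map_sum (⟨⟨Zsqrtd.im, rfl⟩, fun _ _ ↦ rfl⟩ : GaussianInt →+ ℤ) f S

lemma gaussianInt_eq_of_isUnit {u : GaussianInt} (hu : IsUnit u) :
    u = 1 ∨ u = -1 ∨ u = ⟨0, 1⟩ ∨ u = ⟨0, -1⟩ := by
  have hnorm : u.re ^ 2 + u.im ^ 2 = 1 := by
    simpa [Zsqrtd.norm_def, sq] using (Zsqrtd.norm_eq_one_iff' (by decide) u).mpr hu
  have hre : -1 ≤ u.re ∧ u.re ≤ 1 := abs_le.mp (sq_le_one_iff_abs_le_one _ |>.mp (by nlinarith))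
  have him : -1 ≤ u.im ∧ u.im ≤ 1 := abs_le.mp (sq_le_one_iff_abs_le_one _ |>.mp (by nlinarith))
  obtain ⟨a, b⟩ := u
  dsimp only at hnorm hre him
  obtain ⟨_, _⟩ := hre
  obtain ⟨_, _⟩ := him
  interval_cases a <;> interval_cases b <;> revert hnorm <;> decide

lemma gaussianInt_one_add_i_dvd_unit_sub_one {u : GaussianInt} (hu : IsUnit u) :
    (⟨1, 1⟩ : GaussianInt) ∣ u - 1 := by
  obtain rfl | rfl | rfl | rfl := gaussianInt_eq_of_isUnit hu
  exacts [⟨0, by decide⟩, ⟨⟨-1, 1⟩, by decide⟩, ⟨⟨0, 1⟩, by decide⟩, ⟨-1, by decide⟩]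

lemma gaussianInt_two_dvd_unit_sq_sub_one {u : GaussianInt} (hu : IsUnit u) : 2 ∣ u ^ 2 - 1 := by
  obtain rfl | rfl | rfl | rfl := gaussianInt_eq_of_isUnit hu
  exacts [⟨0, by decide⟩, ⟨0, by decide⟩, ⟨-1, by decide⟩, ⟨-1, by decide⟩]

lemma mulChar_gaussianInt_pow_four_eq_one {A : Type*} [CommMonoid A] (χ : MulChar A GaussianInt) :
    χ ^ 4 = 1 := by
  refine MulChar.ext fun u ↦ ?_
  rw [MulChar.pow_apply_coe, MulChar.one_apply_coe]
  obtain h | h | h | h := gaussianInt_eq_of_isUnit (u.isUnit.map χ) <;> rw [h] <;> decide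

lemma mulChar_star_eq_inv {A : Type*} [CommRing A] (χ : MulChar A GaussianInt) :
    star χ = χ⁻¹ := by
  refine MulChar.ext fun u ↦ ?_
  rw [MulChar.star_apply]
  have hu := (Zsqrtd.norm_eq_one_iff' (by decide) _).mpr (u.isUnit.map χ)
  have hmul : χ u * star (χ u) = 1 := by
    rw [← Zsqrtd.norm_eq_mul_conj, hu, Int.cast_one]
  have : χ u * χ⁻¹ u = 1 := by rw [← MulChar.mul_apply, mul_inv_cancel, MulChar.one_apply_coe]
  exact (u.isUnit.map χ).mul_left_cancel (hmul.trans this.symm)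

variable {F : Type*} [Field F] [Fintype F]

lemma star_jacobiSum (χ φ : MulChar F GaussianInt) :
    star (jacobiSum χ φ) = jacobiSum χ⁻¹ φ⁻¹ := by
  simp only [jacobiSum, ← mulChar_star_eq_inv, MulChar.star_apply, star_sum, star_mul']

lemma norm_jacobiSum {χ φ : MulChar F GaussianInt} (hχ : χ ≠ 1) (hφ : φ ≠ 1) (hχφ : χ * φ ≠ 1) :
    (jacobiSum χ φ).norm = Fintype.card F := by
  set T := GaussianInt.toComplex
  have hT : Function.Injective T := GaussianInt.toComplex_injective
  have hchar : ringChar ℂ ≠ ringChar F := by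
    rw [ringChar.eq_zero]
    exact (CharP.ringChar_ne_zero_of_finite F).symm
  have hne {ψ : MulChar F GaussianInt} (hψ : ψ ≠ 1) : ψ.ringHomComp T ≠ 1 :=
    fun h ↦ hψ ((MulChar.ringHomComp_eq_one_iff hT).mp h)
  have hmul := jacobiSum_mul_jacobiSum_inv hchar (hne hχ) (hne hφ)
    (by rw [← MulChar.ringHomComp_mul]; exact hne hχφ)
  rw [MulChar.ringHomComp_inv, MulChar.ringHomComp_inv, jacobiSum_ringHomComp,
    jacobiSum_ringHomComp, ← star_jacobiSum, ← map_mul, ← Zsqrtd.norm_eq_mul_conj, map_intCast]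
    at hmul
  exact_mod_cast hmul

lemma re_sq_add_im_sq_jacobiSum_sq {χ : MulChar F GaussianInt} (hχ : χ ^ 2 ≠ 1) :
    (jacobiSum χ (χ ^ 2)).re ^ 2 + (jacobiSum χ (χ ^ 2)).im ^ 2 = Fintype.card F := by
  have hχ1 : χ ≠ 1 := by rintro rfl; exact hχ (one_pow 2)
  have hχ3 : χ * χ ^ 2 ≠ 1 := fun h ↦ hχ1 <| by
    simpa [← pow_succ', mulChar_gaussianInt_pow_four_eq_one] using congrArg (χ * ·) h.symm
  rw [← norm_jacobiSum hχ1 hχ hχ3, Zsqrtd.norm_def]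
  ring

lemma sum_re_sub_im_eq_zero {χ : MulChar F GaussianInt} (hχ : χ ≠ 1) :
    ∑ x, ((χ x).re - (χ x).im) = 0 := by
  rw [sum_sub_distrib, ← gaussianInt_re_sum, ← gaussianInt_im_sum,
    MulChar.sum_eq_zero_of_ne_one hχ]
  rfl

lemma sum_re_sub_im_mul_apply_sub {χ : MulChar F GaussianInt} (hχ : χ ≠ 1) {d : F} (hd : d ≠ 0) :
    ∑ x, ((χ x).re - (χ x).im) * ((χ (x - d)).re - (χ (x - d)).im) =
      -1 - (χ (-1) * χ d ^ 2 * jacobiSum χ χ).im := by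
  have hterm (x : F) : ((χ x).re - (χ x).im) * ((χ (x - d)).re - (χ (x - d)).im) =
      (χ x * χ⁻¹ (x - d)).re - (χ x * χ (x - d)).im := by
    rw [← mulChar_star_eq_inv, MulChar.star_apply]
    simp
    ring
  have hinv := sum_mulChar_mul_inv_apply_sub hχ hd
  rw [sum_congr rfl fun x _ ↦ hterm x, sum_sub_distrib, ← gaussianInt_re_sum, hinv,
    ← gaussianInt_im_sum, sum_mulChar_mul_apply_sub _ _ hd]
  congr 2
  ring

lemma re_emod_four_and_im_emod_two_jacobiSum_sq {χ : MulChar F GaussianInt} (hχ : χ ^ 2 ≠ 1)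
    (hF : Fintype.card F % 8 = 5) :
    (jacobiSum χ (χ ^ 2)).re % 4 = 1 ∧ (jacobiSum χ (χ ^ 2)).im % 2 = 0 := by
  have hunit {x : F} (hx : x ≠ 0) : IsUnit (χ x) := (isUnit_iff_ne_zero.mpr hx).map χ
  obtain ⟨z, hz⟩ : (⟨1, 1⟩ : GaussianInt) * 2 ∣ jacobiSum χ (χ ^ 2) + Fintype.card F := by
    refine mul_dvd_jacobiSum_add_card (fun h ↦ hχ (by rw [h, one_pow])) hχ
      (fun x hx ↦ gaussianInt_one_add_i_dvd_unit_sub_one (hunit hx)) fun x hx ↦ ?_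
    rw [MulChar.pow_apply' _ two_ne_zero]
    exact gaussianInt_two_dvd_unit_sq_sub_one (hunit hx)
  have hnorm := re_sq_add_im_sq_jacobiSum_sq hχ
  have hre : (jacobiSum χ (χ ^ 2)).re + Fintype.card F = 2 * (z.re - z.im) := by
    have := congrArg Zsqrtd.re hz
    simp only [Zsqrtd.re_add, Zsqrtd.re_natCast, Zsqrtd.re_mul, Zsqrtd.im_mul, Zsqrtd.re_ofNat,
      Zsqrtd.im_ofNat] at this
    lia
  have him : (jacobiSum χ (χ ^ 2)).im = 2 * (z.re + z.im) := by
    simpa [mul_add, add_comm] using congrArg Zsqrtd.im hz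
  refine ⟨?_, by lia⟩
  suffices hodd : (z.re + z.im) % 2 = 1 by lia
  by_contra heven
  obtain ⟨w, hw⟩ := Int.dvd_of_emod_eq_zero (Int.emod_two_ne_one.mp heven)
  have hre_odd : Odd (jacobiSum χ (χ ^ 2)).re := Int.odd_iff.mpr (by lia)
  have hre8 := Int.eight_dvd_sq_sub_one_of_odd hre_odd
  have him16 : (jacobiSum χ (χ ^ 2)).im ^ 2 = 16 * w ^ 2 := by rw [him, hw]; ring
  lia

end GaussianCharacters

section BinomialReduction

variable {F : Type*} [Field F] [Fintype F]

lemma sum_pow_eq_ite {i : ℕ} (hi : i ≠ 0) :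
    ∑ x : F, x ^ i = if Fintype.card F - 1 ∣ i then -1 else 0 := by
  classical
  rw [← FiniteField.sum_pow_units F i, Fintype.sum_eq_add_sum_subtype_ne _ 0, zero_pow hi,
    zero_add, ← unitsEquivNeZero.sum_comp]
  rfl

lemma sum_pow_mul_one_sub_pow {a b : ℕ} (ha : 0 < a) (ha' : a ≤ Fintype.card F - 1)
    (hab : a + b < 2 * (Fintype.card F - 1)) :
    ∑ x : F, x ^ a * (1 - x) ^ b =
      -((-1) ^ (Fintype.card F - 1 - a) * (b.choose (Fintype.card F - 1 - a) : F)) := by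
  set j₀ := Fintype.card F - 1 - a
  have hexpand (x : F) : x ^ a * (1 - x) ^ b =
      ∑ j ∈ range (b + 1), (-1) ^ j * (b.choose j : F) * x ^ (a + j) := by
    rw [sub_eq_neg_add, add_pow, mul_sum]
    refine sum_congr rfl fun j _ ↦ ?_
    rw [neg_pow, pow_add, one_pow]
    ring
  have hdvd (j : ℕ) (hj : j ∈ range (b + 1)) : Fintype.card F - 1 ∣ a + j ↔ j = j₀ := by
    rw [mem_range] at hj
    refine ⟨fun ⟨c, hc⟩ ↦ ?_, fun h ↦ ⟨1, by lia⟩⟩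
    have hc0 : 0 < c := Nat.pos_of_mul_pos_left (by lia : 0 < (Fintype.card F - 1) * c)
    have hc2 : c < 2 := lt_of_mul_lt_mul_left (a := Fintype.card F - 1) (by lia) (Nat.zero_le _)
    obtain rfl : c = 1 := by lia
    lia
  calc ∑ x : F, x ^ a * (1 - x) ^ b
      = ∑ j ∈ range (b + 1), (-1) ^ j * (b.choose j : F) * ∑ x : F, x ^ (a + j) := by
        simp_rw [hexpand, mul_sum]
        exact sum_comm
    _ = ∑ j ∈ range (b + 1), if j = j₀ then -((-1) ^ j * (b.choose j : F)) else 0 := by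
        refine sum_congr rfl fun j hj ↦ ?_
        rw [sum_pow_eq_ite (by lia), if_congr (hdvd j hj) rfl rfl, mul_ite, mul_zero, mul_neg_one]
    _ = -((-1) ^ j₀ * (b.choose j₀ : F)) := by
        rw [sum_ite_eq' (range (b + 1))]
        split_ifs with h
        · rfl
        · rw [Nat.choose_eq_zero_of_lt (by simpa using h)]
          simp

lemma map_jacobiSum_of_map_apply_eq_pow {R : Type*} [CommRing R] {f : R →+* F}
    {χ φ : MulChar F R} {a b : ℕ} (hχ : ∀ x, f (χ x) = x ^ a) (hφ : ∀ x, f (φ x) = x ^ b)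
    (ha : 0 < a) (ha' : a ≤ Fintype.card F - 1) (hab : a + b < 2 * (Fintype.card F - 1)) :
    f (jacobiSum χ φ) =
      -((-1) ^ (Fintype.card F - 1 - a) * (b.choose (Fintype.card F - 1 - a) : F)) := by
  simp only [jacobiSum, map_sum, map_mul, hχ, hφ, sum_pow_mul_one_sub_pow ha ha' hab]

end BinomialReduction

section Arithmetic

lemma not_dvd_choose_mul_geom_sum {p a b : ℕ} (hp : p.Prime) (hb : b ≤ a) (ha : a < p) (m : ℕ) :
    ¬p ∣ (a * ∑ l ∈ range m, p ^ l).choose (b * ∑ l ∈ range m, p ^ l) := by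
  have := Fact.mk hp
  induction m with
  | zero => simpa using hp.one_lt.ne'
  | succ m ih =>
    have hmod {c : ℕ} (hc : c < p) (n : ℕ) : (p * n + c) % p = c := by
      rw [Nat.mul_add_mod, Nat.mod_eq_of_lt hc]
    have hdiv {c : ℕ} (hc : c < p) (n : ℕ) : (p * n + c) / p = n := by
      rw [Nat.mul_add_div hp.pos, Nat.div_eq_of_lt hc, add_zero]
    have hlucas := Choose.choose_modEq_choose_mod_mul_choose_div_nat (p := p)
      (n := a * ∑ l ∈ range (m + 1), p ^ l) (k := b * ∑ l ∈ range (m + 1), p ^ l)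
    simp only [geom_sum_succ, mul_add, mul_one, mul_left_comm _ p, hmod ha, hdiv ha,
      hmod (hb.trans_lt ha), hdiv (hb.trans_lt ha)] at hlucas ⊢
    rw [hlucas.dvd_iff dvd_rfl, hp.dvd_mul, not_or]
    exact ⟨hp.coprime_iff_not_dvd.mp (hp.coprime_choose_of_lt ha hb), ih⟩

lemma not_dvd_choose_of_four_mul_add_one_eq_pow {p m k : ℕ} (hp : p.Prime) (hp4 : p % 4 = 1)
    (hk : 4 * k + 1 = p ^ m) : ¬p ∣ (2 * k).choose k := by
  obtain ⟨c, rfl⟩ : ∃ c, p = 4 * c + 1 := ⟨p / 4, by lia⟩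
  have hkc : k = c * ∑ l ∈ range m, (4 * c + 1) ^ l := by
    have := geom_sum_mul_add (4 * c) m
    lia
  have := not_dvd_choose_mul_geom_sum hp (show c ≤ 2 * c by lia) (by lia) m
  rwa [mul_assoc, ← hkc] at this

lemma prime_mod_four_eq_one_of_dvd_sq_add_sq {p : ℕ} (hp : p.Prime) (hp2 : p ≠ 2) {s t : ℤ}
    (hs : ¬(p : ℤ) ∣ s) (h : (p : ℤ) ∣ s ^ 2 + t ^ 2) : p % 4 = 1 := by
  have := Fact.mk hp
  rw [← ZMod.intCast_zmod_eq_zero_iff_dvd] at hs h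
  push_cast at h
  have := ZMod.mod_four_ne_three_of_sq_eq_neg_sq hs (eq_neg_of_add_eq_zero_left h)
  have := hp.eq_two_or_odd
  lia

lemma pow_dvd_add_of_sq_add_sq_eq {p A B s t : ℤ} {m : ℕ} (hp : Prime p)
    (hAB : A ^ 2 + B ^ 2 = p ^ m) (hst : s ^ 2 + t ^ 2 = p ^ m) (h : ¬p ∣ A * t - B * s) :
    p ^ m ∣ A * t + B * s := by
  refine hp.pow_dvd_of_dvd_mul_right m h ⟨A ^ 2 - s ^ 2, ?_⟩
  linear_combination A ^ 2 * hst - s ^ 2 * hAB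

lemma mul_add_mul_eq_zero_of_sq_add_sq_eq {q A B s t : ℤ} (hAB : A ^ 2 + B ^ 2 = q)
    (hst : s ^ 2 + t ^ 2 = q) (hne : A * s ≠ B * t) (h : q ∣ A * t + B * s) :
    A * t + B * s = 0 := by
  have hsum : (A * s - B * t) ^ 2 + (A * t + B * s) ^ 2 = q ^ 2 := by
    linear_combination (s ^ 2 + t ^ 2) * hAB + q * hst
  have hlt : (A * t + B * s) ^ 2 < q ^ 2 := by
    have := sq_pos_of_ne_zero (sub_ne_zero.mpr hne)
    lia
  have hq : 0 ≤ q := by rw [← hst]; positivity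
  exact Int.eq_zero_of_abs_lt_dvd h (by rwa [sq_lt_sq, abs_of_nonneg hq] at hlt)

lemma eq_neg_of_sq_add_sq_eq {q A B s t : ℤ} (hAB : A ^ 2 + B ^ 2 = q) (hst : s ^ 2 + t ^ 2 = q)
    (hA : A % 4 = 1) (hs : s % 4 = 1) (hB : B % 2 = 0) (h : q ∣ A * t + B * s) : B = -t := by
  have hs0 : s ≠ 0 := by lia
  have hq : q ≠ 0 := by rw [← hst]; positivity
  have hodd : (A * s) % 2 = 1 := by
    rw [Int.mul_emod, show A % 2 = 1 by lia, show s % 2 = 1 by lia]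
    rfl
  have heven : (B * t) % 2 = 0 := by
    rw [Int.mul_emod, hB, zero_mul]
    rfl
  have hzero := mul_add_mul_eq_zero_of_sq_add_sq_eq hAB hst (by lia) h
  have hsq : A ^ 2 = s ^ 2 := mul_right_cancel₀ hq <| by
    linear_combination -A ^ 2 * hst + s ^ 2 * hAB + (A * t - B * s) * hzero
  obtain rfl : A = s := by
    obtain h | h := sq_eq_sq_iff_eq_or_eq_neg.mp hsq <;> lia
  exact mul_right_cancel₀ hs0 (by linear_combination hzero)

end Arithmetic

section PrimitiveElements

variable {F : Type*} [Field F] {α : F}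

lemma IsPrimitiveElt.ne_zero (hα : IsPrimitiveElt α) (hF : ringChar F ≠ 2) : α ≠ 0 := by
  rintro rfl
  obtain ⟨n, hn⟩ := hα (-1) (neg_ne_zero.mpr one_ne_zero)
  obtain rfl | hn0 := eq_or_ne n 0
  · exact Ring.neg_one_ne_one_of_char_ne_two hF (by rw [← hn, pow_zero])
  · simp [zero_pow hn0] at hn

lemma IsPrimitiveElt.mem_zpowers (hα : IsPrimitiveElt α) (hα0 : α ≠ 0) (x : Fˣ) :
    x ∈ Subgroup.zpowers (Units.mk0 α hα0) := by
  obtain ⟨n, hn⟩ := hα x x.ne_zero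
  exact ⟨n, by ext; simp [hn]⟩

lemma IsPrimitiveElt.mulChar_eq_of_apply_eq {R : Type*} [CommMonoidWithZero R]
    (hα : IsPrimitiveElt α) {χ φ : MulChar F R} (h : χ α = φ α) : χ = φ := by
  refine MulChar.ext fun x ↦ ?_
  obtain ⟨n, hn⟩ := hα x x.ne_zero
  rw [← hn, map_pow, map_pow, h]

lemma IsPrimitiveElt.map_mulChar_apply_eq_pow {R : Type*} [CommRing R] (hα : IsPrimitiveElt α)
    {f : R →+* F} {χ : MulChar F R} {a : ℕ} (ha : a ≠ 0) (h : f (χ α) = α ^ a) (x : F) :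
    f (χ x) = x ^ a := by
  obtain rfl | hx := eq_or_ne x 0
  · rw [χ.map_zero, map_zero, zero_pow ha]
  · obtain ⟨n, rfl⟩ := hα x hx
    rw [map_pow, map_pow, h, pow_right_comm]

variable [Fintype F]

lemma IsPrimitiveElt.orderOf_eq (hα : IsPrimitiveElt α) (hα0 : α ≠ 0) :
    orderOf α = Fintype.card F - 1 := by
  have := orderOf_eq_card_of_forall_mem_zpowers (hα.mem_zpowers hα0)
  rwa [← orderOf_units, Units.val_mk0, Nat.card_units, Nat.card_eq_fintype_card] at this

lemma IsPrimitiveElt.exists_mulChar_apply_eq {R : Type*} [CommRing R] (hα : IsPrimitiveElt α)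
    (hα0 : α ≠ 0) {u : Rˣ} (hu : u ^ (Fintype.card F - 1) = 1) :
    ∃ χ : MulChar F R, χ α = u := by
  classical
  rw [← Fintype.card_units, ← mem_rootsOfUnity] at hu
  exact ⟨MulChar.ofRootOfUnity hu (hα.mem_zpowers hα0), MulChar.ofRootOfUnity_spec hu _⟩

variable [DecidableEq F]

lemma IsPrimitiveElt.quadraticChar_eq_neg_one (hα : IsPrimitiveElt α) (hF : ringChar F ≠ 2) :
    quadraticChar F α = -1 := by
  refine (quadraticChar_dichotomy (hα.ne_zero hF)).resolve_left fun h ↦ ?_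
  exact quadraticChar_ne_one hF <| hα.mulChar_eq_of_apply_eq <| by
    rw [h, MulChar.one_apply (isUnit_iff_ne_zero.mpr (hα.ne_zero hF))]

lemma zero_notMem_cycClass (hα0 : α ≠ 0) (e i : ℕ) : 0 ∉ cycClass α e i := by
  simp [cycClass, hα0]

lemma pow_mem_cycClass_iff (hα : IsPrimitiveElt α) (hα0 : α ≠ 0) {e i : ℕ}
    (he : e ∣ Fintype.card F - 1) (hi : i < e) (n : ℕ) : α ^ n ∈ cycClass α e i ↔ n % e = i := by
  have horder := hα.orderOf_eq hα0
  have hpos : 0 < orderOf α := by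
    have := Fintype.one_lt_card (α := F)
    lia
  rw [cycClass, mem_image]
  constructor
  · rintro ⟨j, -, hj⟩
    have hmod := (orderOf_pos_iff.mp hpos).pow_eq_pow_iff_modEq.mp hj
    rw [horder] at hmod
    rw [← hmod.of_dvd he, Nat.mul_add_mod, Nat.mod_eq_of_lt hi]
  · rintro rfl
    refine ⟨n % orderOf α / e, mem_range.mpr ?_, ?_⟩
    · have := Nat.mod_lt n hpos
      exact (Nat.div_le_self _ _).trans_lt (by lia)
    · have he' : e ∣ orderOf α := by rwa [horder]
      rw [← Nat.mod_mod_of_dvd n he', Nat.div_add_mod, pow_mod_orderOf]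

lemma signedIndicator_cycClass_two (hα : IsPrimitiveElt α) (hF : ringChar F ≠ 2) {i : ℕ}
    (hi : i < 2) (x : F) : signedIndicator (cycClass α 2 i) x = (-1) ^ i * quadraticChar F x := by
  obtain rfl | hx := eq_or_ne x 0
  · simp [signedIndicator]
  obtain ⟨n, rfl⟩ := hα x hx
  have hdvd : 2 ∣ Fintype.card F - 1 := by
    have := FiniteField.odd_card_of_char_ne_two hF
    lia
  have hmem := pow_mem_cycClass_iff hα (hα.ne_zero hF) hdvd hi n
  rw [signedIndicator, if_neg hx, if_congr hmem rfl rfl, map_pow, hα.quadraticChar_eq_neg_one hF,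
    ← pow_add, neg_one_pow_eq_ite]
  exact if_congr (by rw [Nat.even_iff]; lia) rfl rfl

lemma Gstar_sdiff_cycClass_two_zero (hα : IsPrimitiveElt α) (hF : ringChar F ≠ 2) :
    Gstar F \ cycClass α 2 0 = cycClass α 2 1 := by
  ext x
  obtain rfl | hx := eq_or_ne x 0
  · simp [Gstar, zero_notMem_cycClass (hα.ne_zero hF)]
  have h0 := signedIndicator_cycClass_two hα hF zero_lt_two x
  have h1 := signedIndicator_cycClass_two hα hF one_lt_two x
  rw [signedIndicator, if_neg hx] at h0 h1
  simp only [Gstar, mem_sdiff, mem_erase, mem_univ]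
  grind

lemma exists_intDiff_eq_of_four_mul_count (hα : IsPrimitiveElt α) (hF : ringChar F ≠ 2)
    {D : Finset F} {u v : ℤ}
    (h : ∀ d ≠ 0, 4 * ((intDiff D).count d : ℤ) = u + quadraticChar F d * v) :
    ∃ a b : ℕ, 4 * (a : ℤ) = u + v ∧ 4 * (b : ℤ) = u - v ∧
      intDiff D = a • (cycClass α 2 0).val + b • (cycClass α 2 1).val := by
  have hone := h 1 one_ne_zero
  have hprim := h α (hα.ne_zero hF)
  rw [map_one] at hone
  rw [hα.quadraticChar_eq_neg_one hF] at hprim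
  refine ⟨_, _, by rw [hone]; ring, by rw [hprim]; ring, ?_⟩
  rw [← Gstar_sdiff_cycClass_two_zero hα hF]
  refine intDiff_eq_of_forall_count_eq_ite (zero_notMem_cycClass (hα.ne_zero hF) 2 0) fun d hd ↦ ?_
  have hd' := signedIndicator_cycClass_two hα hF zero_lt_two d
  have hcount := h d hd
  rw [signedIndicator, if_neg hd, pow_zero, one_mul] at hd'
  rw [← hd'] at hcount
  split_ifs at hcount ⊢ <;> lia

lemma four_mul_count_intDiff_cycClass_two (hα : IsPrimitiveElt α) (hF : Fintype.card F % 4 = 1)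
    {i : ℕ} (hi : i < 2) {d : F} (hd : d ≠ 0) :
    4 * ((intDiff (cycClass α 2 i)).count d : ℤ) =
      Fintype.card F - 3 - 2 * ((-1) ^ i * quadraticChar F d) := by
  have hF2 : ringChar F ≠ 2 := mt FiniteField.even_card_of_char_two (by lia)
  have hneg : quadraticChar F (-1) = 1 := by
    rw [quadraticChar_neg_one hF2, ZMod.χ₄_nat_one_mod_four hF]
  have hneg' : quadraticChar F (-d) = quadraticChar F d := by
    rw [neg_eq_neg_one_mul, map_mul, hneg, one_mul]
  have hsq : ((-1 : ℤ) ^ i) * (-1) ^ i = 1 := by rw [← pow_add, Even.neg_one_pow ⟨i, rfl⟩]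
  rw [four_mul_count_intDiff (zero_notMem_cycClass (hα.ne_zero hF2) 2 i) hd]
  simp only [signedIndicator_cycClass_two hα hF2 hi, ← mul_sum, quadraticChar_sum_zero hF2,
    hneg', mul_mul_mul_comm, hsq, sum_quadraticChar_mul_apply_sub hF2 hd]
  ring

lemma isPDS_cycClass_two (hα : IsPrimitiveElt α) (hF : Fintype.card F % 4 = 1) {i : ℕ}
    (hi : i < 2) :
    IsPDS (cycClass α 2 i) (Fintype.card F) ((Fintype.card F - 1) / 2) ((Fintype.card F - 5) / 4)
      ((Fintype.card F - 1) / 4) := by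
  have hF2 : ringChar F ≠ 2 := mt FiniteField.even_card_of_char_two (by lia)
  have hzero := zero_notMem_cycClass (hα.ne_zero hF2) 2 i
  have hcard := two_mul_card_eq hzero
  simp only [signedIndicator_cycClass_two hα hF2 hi, ← mul_sum, quadraticChar_sum_zero hF2] at hcard
  refine ⟨rfl, by lia, ?_⟩
  rw [erase_eq_of_notMem hzero]
  refine intDiff_eq_of_forall_count_eq_ite hzero fun d hd ↦ ?_
  have hcount := four_mul_count_intDiff_cycClass_two hα hF hi hd
  rw [← signedIndicator_cycClass_two hα hF2 hi, signedIndicator, if_neg hd] at hcount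
  split_ifs at hcount ⊢ <;> lia

end PrimitiveElements

section QuarticCharacter

lemma mulChar_sq_apply_eq_neg_one {A : Type*} [CommMonoid A] {α : A} {χ : MulChar A GaussianInt}
    (hχ : χ α = ⟨0, 1⟩) : (χ ^ 2) α = -1 := by
  rw [MulChar.pow_apply' _ two_ne_zero, hχ]
  decide

lemma mulChar_sq_ne_one {A : Type*} [CommMonoid A] {α : A} {χ : MulChar A GaussianInt}
    (hχ : χ α = ⟨0, 1⟩) : χ ^ 2 ≠ 1 := by
  intro h
  have hsq := mulChar_sq_apply_eq_neg_one hχ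
  obtain hα | hα := em (IsUnit α)
  · rw [h, MulChar.one_apply hα] at hsq
    exact absurd hsq (by decide)
  · rw [MulChar.map_nonunit _ hα] at hsq
    exact absurd hsq (by decide)

variable {F : Type*} [Field F] [Fintype F] {α : F} {χ : MulChar F GaussianInt}

lemma IsPrimitiveElt.exists_mulChar_apply_eq_i (hα : IsPrimitiveElt α) (hα0 : α ≠ 0)
    (hF : 4 ∣ Fintype.card F - 1) : ∃ χ : MulChar F GaussianInt, χ α = ⟨0, 1⟩ := by
  let i : GaussianIntˣ := ⟨⟨0, 1⟩, ⟨0, -1⟩, by decide, by decide⟩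
  have hi : i ^ 4 = 1 := Units.ext (by decide : (⟨0, 1⟩ : GaussianInt) ^ 4 = 1)
  obtain ⟨k, hk⟩ := hF
  exact hα.exists_mulChar_apply_eq hα0 (u := i) (by rw [hk, pow_mul, hi, one_pow])

lemma IsPrimitiveElt.pow_card_div_two (hα : IsPrimitiveElt α) (hF : ringChar F ≠ 2) :
    α ^ (Fintype.card F / 2) = -1 := by
  classical
  rw [← quadraticChar_eq_pow_of_char_ne_two' hF, hα.quadraticChar_eq_neg_one hF, Int.cast_neg,
    Int.cast_one]

lemma mulChar_neg_one_eq_neg_one (hα : IsPrimitiveElt α) (hχ : χ α = ⟨0, 1⟩)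
    (hF : Fintype.card F % 8 = 5) : χ (-1) = -1 := by
  have hF2 : ringChar F ≠ 2 := mt FiniteField.even_card_of_char_two (by lia)
  obtain ⟨j, hj⟩ : ∃ j, Fintype.card F / 2 = 4 * j + 2 := ⟨Fintype.card F / 8, by lia⟩
  rw [← hα.pow_card_div_two hF2, hj, map_pow, hχ, pow_add, pow_mul,
    show (⟨0, 1⟩ : GaussianInt) ^ 4 = 1 by decide, one_pow]
  decide

-- Reduce modulo the prime above `p` at which `i ↦ -α ^ k`, where `k = (q - 1) / 4`: then `χ x`
-- becomes `x ^ (3 * k)`, and the Jacobi sum becomes `± (2 * k).choose k`.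
lemma re_sub_im_mul_pow_jacobiSum_ne_zero {p m : ℕ} (hp : p.Prime) (hp4 : p % 4 = 1)
    (hFp : Fintype.card F = p ^ m) (hF : Fintype.card F % 4 = 1) (hα : IsPrimitiveElt α)
    (hχ : χ α = ⟨0, 1⟩) :
    ((jacobiSum χ (χ ^ 2)).re : F) -
      (jacobiSum χ (χ ^ 2)).im * α ^ ((Fintype.card F - 1) / 4) ≠ 0 := by
  have := Fact.mk hp
  have := charP_of_card_eq_prime_pow hFp
  have hone := Fintype.one_lt_card (α := F)
  set k := (Fintype.card F - 1) / 4
  have hsq : α ^ (2 * k) = -1 := by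
    rw [← hα.pow_card_div_two (mt FiniteField.even_card_of_char_two (by lia))]
    congr 1
    lia
  have hcube : α ^ (3 * k) = -α ^ k := by
    rw [show 3 * k = 2 * k + k by ring, pow_add, hsq, neg_one_mul]
  let f : GaussianInt →+* F := Zsqrtd.lift ⟨α ^ k, by rw [← sq, ← pow_mul', hsq]; norm_num⟩
  have hf (z : GaussianInt) : f z = z.re + z.im * α ^ k := rfl
  have hχinv (x : F) : f (χ⁻¹ x) = x ^ (3 * k) := by
    refine hα.map_mulChar_apply_eq_pow (by lia) ?_ x
    rw [← mulChar_star_eq_inv, MulChar.star_apply, hχ, hf, hcube]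
    simp
  have hχsq (x : F) : f ((χ ^ 2)⁻¹ x) = x ^ (2 * k) := by
    refine hα.map_mulChar_apply_eq_pow (by lia) ?_ x
    rw [← mulChar_star_eq_inv, MulChar.star_apply, mulChar_sq_apply_eq_neg_one hχ, hf, hsq]
    simp
  have hstar : f (star (jacobiSum χ (χ ^ 2))) =
      (jacobiSum χ (χ ^ 2)).re - (jacobiSum χ (χ ^ 2)).im * α ^ k := by
    rw [hf, Zsqrtd.re_star, Zsqrtd.im_star, Int.cast_neg, neg_mul, sub_eq_add_neg]
  rw [← hstar, star_jacobiSum,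
    map_jacobiSum_of_map_apply_eq_pow hχinv hχsq (by lia) (by lia) (by lia),
    show Fintype.card F - 1 - 3 * k = k by lia]
  have hchoose : ((2 * k).choose k : F) ≠ 0 := by
    rw [ne_eq, CharP.cast_eq_zero_iff F p]
    exact not_dvd_choose_of_four_mul_add_one_eq_pow hp hp4 (by lia : 4 * k + 1 = p ^ m)
  exact neg_ne_zero.mpr (mul_ne_zero (pow_ne_zero k (neg_ne_zero.mpr one_ne_zero)) hchoose)

lemma im_jacobiSum_sq_eq_neg {p m : ℕ} (hp : p.Prime) (hFp : Fintype.card F = p ^ m)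
    (hF : Fintype.card F % 8 = 5) (hα : IsPrimitiveElt α) (hχ : χ α = ⟨0, 1⟩) {s t : ℤ}
    (hst : (Fintype.card F : ℤ) = s ^ 2 + t ^ 2) (hps : ¬(p : ℤ) ∣ s) (hs : s % 4 = 1)
    (ht : (t : F) * α ^ ((Fintype.card F - 1) / 4) = s) :
    (jacobiSum χ (χ ^ 2)).im = -t := by
  have := Fact.mk hp
  have := charP_of_card_eq_prime_pow hFp
  have hχ2 := mulChar_sq_ne_one hχ
  have hm : m ≠ 0 := by
    rintro rfl
    lia
  have hpF : p ∣ Fintype.card F := hFp ▸ dvd_pow_self p hm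
  have hp4 : p % 4 = 1 := by
    refine prime_mod_four_eq_one_of_dvd_sq_add_sq hp ?_ hps (t := t) ?_
    · rintro rfl
      lia
    · rw [← hst]
      exact_mod_cast hpF
  have hred := re_sub_im_mul_pow_jacobiSum_ne_zero hp hp4 hFp (by lia) hα hχ
  obtain ⟨hre, him⟩ := re_emod_four_and_im_emod_two_jacobiSum_sq hχ2 hF
  have hnorm := re_sq_add_im_sq_jacobiSum_sq hχ2
  set A := (jacobiSum χ (χ ^ 2)).re
  set B := (jacobiSum χ (χ ^ 2)).im
  have hndvd : ¬(p : ℤ) ∣ A * t - B * s := by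
    rw [← CharP.intCast_eq_zero_iff F p] at hps ⊢
    have ht0 : (t : F) ≠ 0 := fun h ↦ hps (by rw [← ht, h, zero_mul])
    have heq : ((A * t - B * s : ℤ) : F) =
        t * (A - B * α ^ ((Fintype.card F - 1) / 4)) := by
      push_cast
      linear_combination (B : F) * ht
    rw [heq]
    exact mul_ne_zero ht0 hred
  refine eq_neg_of_sq_add_sq_eq hnorm hst.symm hre hs him ?_
  rw [hFp, Nat.cast_pow] at hst hnorm ⊢
  exact pow_dvd_add_of_sq_add_sq_eq (Nat.prime_iff_prime_int.mp hp) hnorm hst.symm hndvd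

variable [DecidableEq F]

lemma mulChar_sq_apply_eq_quadraticChar (hα : IsPrimitiveElt α) (hF : ringChar F ≠ 2)
    (hχ : χ α = ⟨0, 1⟩) (x : F) : χ x ^ 2 = quadraticChar F x := by
  have : χ ^ 2 = (quadraticChar F).ringHomComp (Int.castRingHom GaussianInt) := by
    refine hα.mulChar_eq_of_apply_eq ?_
    rw [mulChar_sq_apply_eq_neg_one hχ, MulChar.ringHomComp_apply, hα.quadraticChar_eq_neg_one hF]
    rfl
  rw [← MulChar.pow_apply' _ two_ne_zero, this]
  rfl

lemma signedIndicator_cycClass_four_zero_union_three (hα : IsPrimitiveElt α) (hα0 : α ≠ 0)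
    (hF : 4 ∣ Fintype.card F - 1) (hχ : χ α = ⟨0, 1⟩) (x : F) :
    signedIndicator (cycClass α 4 0 ∪ cycClass α 4 3) x = (χ x).re - (χ x).im := by
  obtain rfl | hx := eq_or_ne x 0
  · simp [signedIndicator, χ.map_zero]
  obtain ⟨n, rfl⟩ := hα x hx
  have hmem : α ^ n ∈ cycClass α 4 0 ∪ cycClass α 4 3 ↔ n % 4 = 0 ∨ n % 4 = 3 := by
    rw [mem_union, pow_mem_cycClass_iff hα hα0 hF (by lia),
      pow_mem_cycClass_iff hα hα0 hF (by lia)]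
  have hpow : χ (α ^ n) = ⟨0, 1⟩ ^ (n % 4) := by
    rw [map_pow, hχ, pow_eq_pow_mod n (show (⟨0, 1⟩ : GaussianInt) ^ 4 = 1 by decide)]
  have hlt := Nat.mod_lt n (show 0 < 4 by lia)
  rw [signedIndicator, if_neg hx, if_congr hmem rfl rfl, hpow]
  generalize n % 4 = r at hlt ⊢
  interval_cases r <;> decide

lemma card_cycClass_four_zero_union_three (hα : IsPrimitiveElt α) (hα0 : α ≠ 0)
    (hF : 4 ∣ Fintype.card F - 1) :
    #(cycClass α 4 0 ∪ cycClass α 4 3) = (Fintype.card F - 1) / 2 := by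
  obtain ⟨χ, hχ⟩ := hα.exists_mulChar_apply_eq_i hα0 hF
  have hχ1 : χ ≠ 1 := fun h ↦ mulChar_sq_ne_one hχ (by rw [h, one_pow])
  have hzero : 0 ∉ cycClass α 4 0 ∪ cycClass α 4 3 := by simp [zero_notMem_cycClass hα0]
  have hcard := two_mul_card_eq hzero
  simp only [signedIndicator_cycClass_four_zero_union_three hα hα0 hF hχ,
    sum_re_sub_im_eq_zero hχ1] at hcard
  have := Fintype.one_lt_card (α := F)
  lia

lemma four_mul_count_intDiff_cycClass_four_zero_union_three (hα : IsPrimitiveElt α)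
    (hχ : χ α = ⟨0, 1⟩) (hF : Fintype.card F % 8 = 5) {d : F} (hd : d ≠ 0) :
    4 * ((intDiff (cycClass α 4 0 ∪ cycClass α 4 3)).count d : ℤ) =
      Fintype.card F - 3 - quadraticChar F d * (jacobiSum χ (χ ^ 2)).im := by
  have hF2 : ringChar F ≠ 2 := mt FiniteField.even_card_of_char_two (by lia)
  have hF4 : 4 ∣ Fintype.card F - 1 := by lia
  have hα0 := hα.ne_zero hF2
  have hχ1 : χ ≠ 1 := fun h ↦ mulChar_sq_ne_one hχ (by rw [h, one_pow])
  have hneg := mulChar_neg_one_eq_neg_one hα hχ hF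
  have hodd : (χ (-d)).re - (χ (-d)).im = -((χ d).re - (χ d).im) := by
    rw [neg_eq_neg_one_mul d, map_mul, hneg, neg_one_mul, Zsqrtd.re_neg, Zsqrtd.im_neg]
    ring
  have hauto : (χ (-1) * χ d ^ 2 * jacobiSum χ χ).im =
      quadraticChar F d * (jacobiSum χ (χ ^ 2)).im := by
    rw [jacobiSum_self_eq (mulChar_gaussianInt_pow_four_eq_one χ), hneg,
      mulChar_sq_apply_eq_quadraticChar hα hF2 hχ]
    simp
  have hzero : 0 ∉ cycClass α 4 0 ∪ cycClass α 4 3 := by simp [zero_notMem_cycClass hα0]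
  rw [four_mul_count_intDiff hzero hd]
  simp only [signedIndicator_cycClass_four_zero_union_three hα hα0 hF4 hχ, hodd,
    sum_re_sub_im_eq_zero hχ1, sum_re_sub_im_mul_apply_sub hχ1 hd, hauto]
  ring

end QuarticCharacter

/-- For a prime power `q = p^m ≡ 5 (mod 8)` with the Katre–Rajwade
normalized representation `q = s² + t²`, the set `D = C_0^4 ∪ C_3^4` satisfies
`Δ(D) = ((q-3+t)/4) • C_0^2 + ((q-3-t)/4) • C_1^2`; in particular `D` is a skew PDS
corresponding to the Paley PDS `C_0^2` if `t = -2`, and to `C_1^2` if `t = 2`. -/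
theorem stmt_1 {F : Type*} [Field F] [Fintype F] [DecidableEq F]
    (q p m : ℕ) (hp : p.Prime) (hq : Fintype.card F = q) (hqpm : q = p ^ m)
    (hq8 : q % 8 = 5)
    (α : F) (hα : IsPrimitiveElt α)
    (s t : ℤ) (hst : (q : ℤ) = s ^ 2 + t ^ 2)
    (hps : ¬((p : ℤ) ∣ s)) (hs4 : s % 4 = 1)
    (ht : (t : F) * α ^ ((q - 1) / 4) = (s : F)) :
    (∃ a b : ℕ, 4 * (a : ℤ) = (q : ℤ) - 3 + t ∧ 4 * (b : ℤ) = (q : ℤ) - 3 - t ∧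
      intDiff (cycClass α 4 0 ∪ cycClass α 4 3) =
        a • (cycClass α 2 0).val + b • (cycClass α 2 1).val) ∧
    (t = -2 → IsSkewPDS (cycClass α 4 0 ∪ cycClass α 4 3) (cycClass α 2 0)
        q ((q - 1) / 2) ((q - 5) / 4) ((q - 1) / 4)) ∧
    (t = 2 → IsSkewPDS (cycClass α 4 0 ∪ cycClass α 4 3) (cycClass α 2 1)
        q ((q - 1) / 2) ((q - 5) / 4) ((q - 1) / 4)) := by
  subst hq
  have hF : ringChar F ≠ 2 := mt FiniteField.even_card_of_char_two (by lia)
  have hα0 := hα.ne_zero hF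
  obtain ⟨χ, hχ⟩ := hα.exists_mulChar_apply_eq_i hα0 (by lia)
  have hJ := im_jacobiSum_sq_eq_neg hp hqpm hq8 hα hχ hst hps hs4 ht
  have hcount (d : F) (hd : d ≠ 0) :
      4 * ((intDiff (cycClass α 4 0 ∪ cycClass α 4 3)).count d : ℤ) =
        Fintype.card F - 3 + quadraticChar F d * t := by
    rw [four_mul_count_intDiff_cycClass_four_zero_union_three hα hχ hq8 hd, hJ]
    ring
  have hskew {i : ℕ} (hi : i < 2) (hti : t = -2 * (-1) ^ i) :
      IsSkewPDS (cycClass α 4 0 ∪ cycClass α 4 3) (cycClass α 2 i) (Fintype.card F)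
        ((Fintype.card F - 1) / 2) ((Fintype.card F - 5) / 4) ((Fintype.card F - 1) / 4) := by
    refine (isPDS_cycClass_two hα (by lia) hi).isSkewPDS
      (card_cycClass_four_zero_union_three hα hα0 (by lia))
      (intDiff_eq_of_forall_count_eq fun d hd ↦ ?_)
    have hD := hcount d hd
    have hA := four_mul_count_intDiff_cycClass_two hα (by lia) hi hd
    rw [hti] at hD
    lia
  refine ⟨?_, fun h ↦ hskew zero_lt_two (by rw [h]; rfl),
    fun h ↦ hskew one_lt_two (by rw [h]; rfl)⟩
  exact exists_intDiff_eq_of_four_mul_count hα hF hcount
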